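/- arXiv:math/0210139 — 2 statements merged into one kernel-verified Lean document; each statement's English description precedes it below -/
import Mathlib

section
/- Let A be a unital complex *-algebra, q a nonzero real number, and x₁, …, x_n ∈ A. Let u_{(2k−1)} denote the 2^k × 2^k matrix over A obtained by setting x₀ = 0 in the recursively defined unipotent matrix u_{(2k)} (so u_{(1)} = [[0, x₁],[x₁*, 0]] and u_{(2k−1)} = [[q⁻¹ u_{(2k−3)}, x_k·1],[x_k*·1, −u_{(2k−3)}]]). Let u'_{(2n+1)} be the 2^{n+1} × 2^{n+1} matrix obtained from u_{(2n+1)} (built from generators labelled x₁, …, x_{n+1}) by substituting x₁ ↦ 0 and x_{j+1} ↦ x_j for j = 1, …, n. Then u'_{(2n+1)} = u_{(2n−1)} ⊗ I₂, the Kronecker product of u_{(2n−1)} with the 2 × 2 identity matrix. -/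
/-- The recursively defined matrices `u_{(2k)}`:  `u_{(0)} = x₀` and
`u_{(2k)} = [[q⁻¹ u_{(2k-2)}, x_k · 1], [x_k* · 1, -u_{(2k-2)}]]`, as `2^k × 2^k`
matrices over `A`.  The odd matrix `u_{(2k-1)}` is obtained by substituting `x₀ ↦ 0`. -/
noncomputable def uMat {A : Type*} [Ring A] [Algebra ℂ A] [StarRing A] (q : ℝ) (x : ℕ → A) :
    (k : ℕ) → Matrix (Fin (2 ^ k)) (Fin (2 ^ k)) A
  | 0 => Matrix.of fun _ _ => x 0
  | k + 1 =>
    Matrix.reindex (finSumFinEquiv.trans (finCongr (by rw [pow_succ, mul_two])))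
      (finSumFinEquiv.trans (finCongr (by rw [pow_succ, mul_two])))
      (Matrix.fromBlocks ((q : ℂ)⁻¹ • uMat q x k)
        (x (k + 1) • (1 : Matrix (Fin (2 ^ k)) (Fin (2 ^ k)) A))
        (star (x (k + 1)) • (1 : Matrix (Fin (2 ^ k)) (Fin (2 ^ k)) A))
        (-uMat q x k))

/-!
Up to a reindexing, the step `M ↦ [[q⁻¹ M, a · 1], [a* · 1, -M]]` commutes with `M ↦ M ⊗ I`,
because `1 ⊗ I` is again an identity matrix. Hence if two recursions reach `M` and `M ⊗ I` at some
stage and receive the same generators from there on, all later stages differ by `⊗ I` as well.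
Setting `x₀, …, x_m` to zero makes the `m`-th stage vanish, hence equal to `0 ⊗ I`.
-/

open Matrix
open scoped Kronecker

theorem neg_kronecker {l m n p A : Type*} [Mul A] [HasDistribNeg A] (M : Matrix l m A)
    (N : Matrix n p A) : (-M) ⊗ₖ N = -(M ⊗ₖ N) :=
  ext fun _ _ => neg_mul _ _

theorem reindex_fromBlocks_kroneckerMap {l m n o r s α β γ : Type*} (f : α → β → γ)
    (M₁₁ : Matrix n l α) (M₁₂ : Matrix n m α) (M₂₁ : Matrix o l α) (M₂₂ : Matrix o m α)
    (N : Matrix r s β) :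
    reindex (Equiv.sumProdDistrib n o r) (Equiv.sumProdDistrib l m s)
        (kroneckerMap f (fromBlocks M₁₁ M₁₂ M₂₁ M₂₂) N) =
      fromBlocks (kroneckerMap f M₁₁ N) (kroneckerMap f M₁₂ N)
        (kroneckerMap f M₂₁ N) (kroneckerMap f M₂₂ N) := by
  ext (i | i) (j | j) <;> rfl

theorem reindex_sumCongr_fromBlocks {l m n o l' m' n' o' α : Type*}
    (en : n ≃ n') (eo : o ≃ o') (el : l ≃ l') (em : m ≃ m')
    (M₁₁ : Matrix n l α) (M₁₂ : Matrix n m α) (M₂₁ : Matrix o l α) (M₂₂ : Matrix o m α) :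
    reindex (en.sumCongr eo) (el.sumCongr em) (fromBlocks M₁₁ M₁₂ M₂₁ M₂₂) =
      fromBlocks (reindex en el M₁₁) (reindex en em M₁₂)
        (reindex eo el M₂₁) (reindex eo em M₂₂) := by
  ext (i | i) (j | j) <;> rfl

section UnipotentBlock

variable {R A ι κ : Type*} [Ring A] [Star A] [SMul R A] [DecidableEq ι] [DecidableEq κ]

/-- One step `M ↦ [[c M, a · 1], [a* · 1, -M]]` of the recursion defining the unipotent matrices,
on an arbitrary index type; `uMat` uses it with `c = q⁻¹` and `a = x_k`. -/
def unipotentBlock (c : R) (a : A) (M : Matrix ι ι A) : Matrix (ι ⊕ ι) (ι ⊕ ι) A :=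
  fromBlocks (c • M) (a • (1 : Matrix ι ι A)) (star a • (1 : Matrix ι ι A)) (-M)

theorem unipotentBlock_reindex (c : R) (a : A) (e : ι ≃ κ) (M : Matrix ι ι A) :
    unipotentBlock c a (reindex e e M) =
      reindex (e.sumCongr e) (e.sumCongr e) (unipotentBlock c a M) := by
  rw [unipotentBlock, unipotentBlock, reindex_sumCongr_fromBlocks]
  simp only [reindex_apply, submatrix_smul, submatrix_neg, submatrix_one_equiv, Pi.smul_apply,
    Pi.neg_apply]

theorem unipotentBlock_kronecker_one [IsScalarTower R A A] (c : R) (a : A) (M : Matrix ι ι A) :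
    unipotentBlock c a (M ⊗ₖ (1 : Matrix κ κ A)) =
      reindex (Equiv.sumProdDistrib ι ι κ) (Equiv.sumProdDistrib ι ι κ)
        (unipotentBlock c a M ⊗ₖ (1 : Matrix κ κ A)) := by
  simp only [unipotentBlock, reindex_fromBlocks_kroneckerMap, smul_kronecker, neg_kronecker,
    one_kronecker_one]

end UnipotentBlock

/-- The identification of two blocks of size `2 ^ k` with one of size `2 ^ (k + 1)` used in
`uMat`. -/
def blockIndex (k : ℕ) : Fin (2 ^ k) ⊕ Fin (2 ^ k) ≃ Fin (2 ^ (k + 1)) :=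
  finSumFinEquiv.trans (finCongr (by rw [pow_succ, mul_two]))

/-- The index identification flattening a Kronecker product of matrices of sizes `2 ^ n` and
`2 ^ m`. The total exponent `N` is a separate variable so that no casts arise between
`n + 1 + m` and `n + m + 1`. -/
def kroneckerIndex {n m N : ℕ} (h : N = n + m) : Fin (2 ^ n) × Fin (2 ^ m) ≃ Fin (2 ^ N) :=
  finProdFinEquiv.trans (finCongr (by rw [h, pow_add]))

theorem prodCongr_blockIndex_trans_kroneckerIndex {n m N : ℕ} (h : N = n + m)
    (h' : N + 1 = n + 1 + m) :
    ((blockIndex n).prodCongr (Equiv.refl (Fin (2 ^ m)))).trans (kroneckerIndex h') =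
      (Equiv.sumProdDistrib _ _ _).trans
        (((kroneckerIndex h).sumCongr (kroneckerIndex h)).trans (blockIndex N)) := by
  subst h
  ext ⟨i | i, j⟩
  · simp [blockIndex, kroneckerIndex]
  · simp [blockIndex, kroneckerIndex, pow_add, add_mul, add_assoc, mul_comm]

section UMat

variable {A : Type*} [Ring A] [Algebra ℂ A] [StarRing A] (q : ℝ)

theorem uMat_zero (x : ℕ → A) : uMat q x 0 = x 0 • 1 := by
  have : Subsingleton (Fin (2 ^ 0)) := by
    rw [pow_zero]
    infer_instance
  ext i j
  simp [uMat, Subsingleton.elim i j]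

theorem uMat_succ (x : ℕ → A) (k : ℕ) :
    uMat q x (k + 1) = reindex (blockIndex k) (blockIndex k)
      (unipotentBlock (q : ℂ)⁻¹ (x (k + 1)) (uMat q x k)) :=
  rfl

theorem uMat_eq_zero {x : ℕ → A} {k : ℕ} (hx : ∀ i ≤ k, x i = 0) : uMat q x k = 0 := by
  induction k with
  | zero => rw [uMat_zero, hx 0 le_rfl, zero_smul]
  | succ k ih =>
    have hk : uMat q x k = 0 := ih fun i hi => hx i (hi.trans k.le_succ)
    rw [uMat_succ, hx _ le_rfl, hk]
    simp [unipotentBlock]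

theorem uMat_eq_kronecker_one {x y : ℕ → A} {m : ℕ} (hm : uMat q y m = x 0 • 1)
    (hxy : ∀ k, y (k + 1 + m) = x (k + 1)) {n N : ℕ} (h : N = n + m) :
    uMat q y N = reindex (kroneckerIndex h) (kroneckerIndex h)
      (uMat q x n ⊗ₖ (1 : Matrix (Fin (2 ^ m)) (Fin (2 ^ m)) A)) := by
  induction n generalizing N with
  | zero =>
    obtain rfl : N = m := by rw [h, zero_add]
    rw [hm, uMat_zero, smul_kronecker, one_kronecker_one, reindex_apply, submatrix_smul,
      Pi.smul_apply, Pi.smul_apply, submatrix_one_equiv]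
  | succ n ih =>
    obtain ⟨N, rfl⟩ : ∃ K, N = K + 1 := ⟨n + m, by rw [h, Nat.add_right_comm]⟩
    have hN : N = n + m := by omega
    have hy : y (N + 1) = x (n + 1) := by rw [h, hxy]
    rw [uMat_succ, uMat_succ, hy, ih hN, unipotentBlock_reindex, unipotentBlock_kronecker_one,
      kroneckerMap_reindex_left]
    simp only [← Equiv.trans_apply, reindex_trans, Equiv.trans_assoc,
      prodCongr_blockIndex_trans_kroneckerIndex hN h]

theorem uMat_substitution_kronecker_general (_hq : q ≠ 0) (m n : ℕ) (x : ℕ → A) :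
    uMat q (fun i => if i ≤ m then 0 else x (i - m)) (n + m) =
      reindex (kroneckerIndex rfl) (kroneckerIndex rfl)
        (uMat q (fun i => if i = 0 then 0 else x i) n ⊗ₖ
          (1 : Matrix (Fin (2 ^ m)) (Fin (2 ^ m)) A)) := by
  refine uMat_eq_kronecker_one q ?_ (fun k => ?_) rfl
  · rw [uMat_eq_zero q fun i hi => if_pos hi, if_pos rfl, zero_smul]
  · have hk : ¬ k + 1 + m ≤ m := by omega
    rw [if_neg hk, if_neg k.succ_ne_zero, Nat.add_sub_cancel]

end UMat

/-- Substituting `x₁ ↦ 0` and `x_{j+1} ↦ x_j` in the odd unipotent `u_{(2n+1)}`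
(i.e. `u_{(2n+2)}` with `x₀ ↦ 0`) yields `u_{(2n-1)} ⊗ I₂`, the Kronecker product of the
lower odd unipotent with the `2 × 2` identity matrix. -/
theorem uMat_substitution_kronecker {A : Type*} [Ring A] [Algebra ℂ A] [StarRing A]
    [StarModule ℂ A] (q : ℝ) (hq : q ≠ 0) (n : ℕ) (hn : 1 ≤ n) (x : ℕ → A) :
    uMat q (fun i => if i ≤ 1 then 0 else x (i - 1)) (n + 1) =
      Matrix.reindex (finProdFinEquiv.trans (finCongr (by rw [pow_succ])))
        (finProdFinEquiv.trans (finCongr (by rw [pow_succ])))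
        (Matrix.kroneckerMap (· * ·) (uMat q (fun i => if i = 0 then 0 else x i) n)
          (1 : Matrix (Fin 2) (Fin 2) A)) :=
  uMat_substitution_kronecker_general q hq 1 n x
end

section
/- Let q ∈ ℝ with |q| > 1 and n ≥ 1, and let Ψ₊, Ψ₋ : F → B(ℓ²(ℕⁿ)) be the *-homomorphisms of the representations ψ^{(2n)}_± of the quantum sphere S^{2n}_q. Let p := 2^{n−1}·1 + (1/2)(q⁻¹ − 1)ⁿ x₀ ∈ F be the matrix trace of the idempotent e_{(2n)} = (1 + u_{(2n)})/2. Then Ψ₊(p) − Ψ₋(p) is trace class and Tr[Ψ₊(p) − Ψ₋(p)] = (−1)ⁿ. (This is the pairing ⟨μ_ev, e_{(2n)}⟩ of the even Fredholm module with the K-theory class of e_{(2n)}.) -/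
/-- The standard orthonormal basis vector of `ℓ²(ℕⁿ)` at `k`. -/
noncomputable def eVec (n : ℕ) (k : Fin n → ℕ) : lp (fun _ : Fin n → ℕ => ℂ) 2 :=
  lp.single 2 k 1

/-- A bounded operator on `ℓ²(ℕⁿ)` is Hilbert–Schmidt if the squared norms of the images
of the standard basis vectors are summable. -/
def IsHilbertSchmidt {n : ℕ}
    (T : lp (fun _ : Fin n → ℕ => ℂ) 2 →L[ℂ] lp (fun _ : Fin n → ℕ => ℂ) 2) : Prop :=
  Summable fun k : Fin n → ℕ => ‖T (eVec n k)‖ ^ 2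

/-- A bounded operator is trace class iff it is a product of two Hilbert–Schmidt
operators. -/
def IsTraceClass {n : ℕ}
    (T : lp (fun _ : Fin n → ℕ => ℂ) 2 →L[ℂ] lp (fun _ : Fin n → ℕ => ℂ) 2) : Prop :=
  ∃ A B, IsHilbertSchmidt A ∧ IsHilbertSchmidt B ∧ T = A * B

/-!
The scalar parts cancel in `ψ₊(p) - ψ₋(p)`, leaving the diagonal operator with eigenvalue
`(q⁻¹ - 1)ⁿ q^{-|k|}` at `k`. A diagonal operator with absolutely summable eigenvalues is trace
class because pointwise square roots of the eigenvalues give a Hilbert–Schmidt square root.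
The sum over `k` is the `n`-th power of a geometric series, so the trace is
`(q⁻¹ - 1)ⁿ (1 - q⁻¹)⁻ⁿ = (-1)ⁿ`.
-/

open scoped lp ENNReal InnerProductSpace

section PiSums

variable {n : ℕ} {R : Type*} [NormedCommRing R]

theorem summable_norm_prod_pi_fin {κ : Fin n → Type*} {f : ∀ i, κ i → R}
    (hf : ∀ i, Summable fun x => ‖f i x‖) :
    Summable fun k : ∀ i, κ i => ‖∏ i, f i (k i)‖ := by
  induction n with
  | zero => exact (hasSum_fintype _).summable
  | succ n ih =>
    rw [← (Fin.consEquiv κ).summable_iff]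
    refine ((hf 0).mul_norm (ih fun i => hf i.succ)).congr fun x => ?_
    simp only [Function.comp_apply, Fin.prod_univ_succ, Fin.consEquiv_apply, Fin.cons_zero,
      Fin.cons_succ]

theorem hasSum_prod_pi_fin [CompleteSpace R] {κ : Fin n → Type*} {f : ∀ i, κ i → R}
    {s : Fin n → R}
    (hf : ∀ i, Summable fun x => ‖f i x‖) (hs : ∀ i, HasSum (f i) (s i)) :
    HasSum (fun k : ∀ i, κ i => ∏ i, f i (k i)) (∏ i, s i) := by
  induction n with
  | zero => simp
  | succ n ih =>
    rw [← (Fin.consEquiv κ).hasSum_iff, Fin.prod_univ_succ]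
    have h_tail := ih (fun i => hf i.succ) fun i => hs i.succ
    have h_tail_norm := summable_norm_prod_pi_fin fun i => hf i.succ
    refine ((hs 0).mul h_tail ((hf 0).mul_norm h_tail_norm).of_norm).congr_fun fun x => ?_
    simp only [Function.comp_apply, Fin.prod_univ_succ, Fin.consEquiv_apply, Fin.cons_zero,
      Fin.cons_succ]

end PiSums

section MultivariateGeometric

variable {n : ℕ} {K : Type*} [NormedField K] {r : K}

theorem summable_norm_pow_sum (hr : ‖r‖ < 1) :
    Summable fun k : Fin n → ℕ => ‖r ^ ∑ i, k i‖ := by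
  simpa only [Finset.prod_pow_eq_pow_sum] using
    summable_norm_prod_pi_fin fun _ : Fin n => summable_norm_geometric_of_norm_lt_one hr

theorem hasSum_pow_sum [CompleteSpace K] (hr : ‖r‖ < 1) :
    HasSum (fun k : Fin n → ℕ => r ^ ∑ i, k i) ((1 - r)⁻¹ ^ n) := by
  simpa only [Finset.prod_pow_eq_pow_sum, Fin.prod_const] using
    hasSum_prod_pi_fin (fun _ : Fin n => summable_norm_geometric_of_norm_lt_one hr)
      fun _ => hasSum_geometric_of_norm_lt_one hr

end MultivariateGeometric

section DiagonalOperators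

variable {ι 𝕜 : Type*} [NontriviallyNormedField 𝕜] (p : ℝ≥0∞) [Fact (1 ≤ p)]

/-- The operator of coordinatewise multiplication by the bounded family `d` on `ℓ^p(ι, 𝕜)`, that is,
the diagonal operator with eigenvalues `d` in the standard basis. -/
noncomputable def diagonalCLM (d : ℓ^∞(ι, 𝕜)) : ℓ^p(ι, 𝕜) →L[𝕜] ℓ^p(ι, 𝕜) :=
  lp.mapCLM p (fun i => ContinuousLinearMap.mul 𝕜 𝕜 (d i)) (norm_nonneg d) fun i => by
    simpa using lp.norm_apply_le_norm ENNReal.top_ne_zero d i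

theorem diagonalCLM_apply_single [DecidableEq ι] (d : ℓ^∞(ι, 𝕜)) (i : ι) :
    diagonalCLM p d (lp.single p i 1) = d i • lp.single p i 1 := by
  ext j
  obtain rfl | hij := eq_or_ne j i
  · simp [diagonalCLM]
  · simp [diagonalCLM, hij]

end DiagonalOperators

section TraceClass

variable {n : ℕ} {T : ℓ²(Fin n → ℕ, ℂ) →L[ℂ] ℓ²(Fin n → ℕ, ℂ)} {d : (Fin n → ℕ) → ℂ}

theorem norm_eVec (k : Fin n → ℕ) : ‖eVec n k‖ = 1 := by
  rw [eVec, lp.norm_single two_pos, norm_one]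

theorem inner_eVec_apply_of_diagonal (hT : ∀ k, T (eVec n k) = d k • eVec n k) (k : Fin n → ℕ) :
    ⟪eVec n k, T (eVec n k)⟫_ℂ = d k := by
  rw [hT, inner_smul_right, inner_self_eq_norm_sq_to_K, norm_eVec, RCLike.ofReal_one, one_pow,
    mul_one]

theorem isHilbertSchmidt_iff_of_diagonal (hT : ∀ k, T (eVec n k) = d k • eVec n k) :
    IsHilbertSchmidt T ↔ Summable fun k => ‖d k‖ ^ 2 := by
  simp only [IsHilbertSchmidt, hT, norm_smul, norm_eVec, mul_one]

theorem isTraceClass_of_diagonal (hT : ∀ k, T (eVec n k) = d k • eVec n k)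
    (hd : Summable fun k => ‖d k‖) : IsTraceClass T := by
  choose w hw using fun k => IsAlgClosed.exists_pow_nat_eq (d k) two_pos
  have hw_sq : Summable fun k => ‖w k‖ ^ 2 := by simpa only [← norm_pow, hw] using hd
  have hw_mem : Memℓp w ∞ :=
    (memℓp_gen (p := 2) (by simpa using hw_sq)).of_exponent_ge le_top
  let A := diagonalCLM 2 (⟨w, hw_mem⟩ : ℓ^∞(Fin n → ℕ, ℂ))
  have hA (k) : A (eVec n k) = w k • eVec n k := diagonalCLM_apply_single 2 _ k
  have hA_hs : IsHilbertSchmidt A := (isHilbertSchmidt_iff_of_diagonal hA).2 hw_sq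
  refine ⟨A, A, hA_hs, hA_hs, lp.ext_continuousLinearMap ENNReal.ofNat_ne_top fun k =>
    ContinuousLinearMap.ext_ring ?_⟩
  change T (eVec n k) = A (A (eVec n k))
  rw [hT, hA, map_smul, hA, smul_smul, ← sq, hw]

end TraceClass

theorem even_pairing_general {q : ℂ} (hq : 1 < ‖q‖) (n : ℕ) (c : ℂ)
    {X0p X0m Pp Pm : ℓ²(Fin n → ℕ, ℂ) →L[ℂ] ℓ²(Fin n → ℕ, ℂ)}
    (hX0p : ∀ k, X0p (eVec n k) = (q ^ ∑ j, k j)⁻¹ • eVec n k)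
    (hX0m : ∀ k, X0m (eVec n k) = (-(q ^ ∑ j, k j)⁻¹) • eVec n k)
    (hPp : Pp = c • 1 + ((q⁻¹ - 1) ^ n / 2) • X0p)
    (hPm : Pm = c • 1 + ((q⁻¹ - 1) ^ n / 2) • X0m) :
    IsTraceClass (Pp - Pm) ∧
      HasSum (fun k => ⟪eVec n k, (Pp - Pm) (eVec n k)⟫_ℂ) ((-1) ^ n) := by
  have hr : ‖q⁻¹‖ < 1 := by rw [norm_inv]; exact inv_lt_one_of_one_lt₀ hq
  have hr_ne : 1 - q⁻¹ ≠ 0 := sub_ne_zero.2 fun h => by simp [← h] at hr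
  have hdiag (k) : (Pp - Pm) (eVec n k) =
      ((q⁻¹ - 1) ^ n * q⁻¹ ^ ∑ j, k j) • eVec n k := by
    simp only [hPp, hPm, add_sub_add_left_eq_sub, sub_apply, smul_apply, hX0p, hX0m, inv_pow]
    module
  refine ⟨isTraceClass_of_diagonal hdiag ?_, ?_⟩
  · simpa only [norm_mul] using (summable_norm_pow_sum hr).mul_left ‖(q⁻¹ - 1) ^ n‖
  · have hvalue : (q⁻¹ - 1) ^ n * (1 - q⁻¹)⁻¹ ^ n = (-1) ^ n := by
      rw [← neg_sub 1 q⁻¹, ← mul_pow, neg_mul, mul_inv_cancel₀ hr_ne]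
    simpa only [inner_eVec_apply_of_diagonal hdiag, hvalue] using
      (hasSum_pow_sum (n := n) hr).mul_left ((q⁻¹ - 1) ^ n)

/-- Pairing of the even Fredholm module with the idempotent `e_{(2n)}`:  for
`p = 2^{n-1}·1 + ½(q⁻¹-1)ⁿ x₀` (the matrix trace of `e_{(2n)}`), the operator
`ψ₊(p) - ψ₋(p)` is trace class with trace `(-1)ⁿ`. -/
theorem even_pairing (q : ℝ) (hq : 1 < |q|) (n : ℕ) (hn : 1 ≤ n)
    (X0p X0m : lp (fun _ : Fin n → ℕ => ℂ) 2 →L[ℂ] lp (fun _ : Fin n → ℕ => ℂ) 2)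
    (hX0p : ∀ k : Fin n → ℕ,
      X0p (eVec n k) = (((q ^ (∑ j, k j))⁻¹ : ℝ) : ℂ) • eVec n k)
    (hX0m : ∀ k : Fin n → ℕ,
      X0m (eVec n k) = ((-(q ^ (∑ j, k j))⁻¹ : ℝ) : ℂ) • eVec n k) :
    ∀ Pp Pm : lp (fun _ : Fin n → ℕ => ℂ) 2 →L[ℂ] lp (fun _ : Fin n → ℕ => ℂ) 2,
      Pp = ((2 : ℂ) ^ (n - 1)) • 1 + ((((q : ℂ)⁻¹ - 1) ^ n) / 2) • X0p →
      Pm = ((2 : ℂ) ^ (n - 1)) • 1 + ((((q : ℂ)⁻¹ - 1) ^ n) / 2) • X0m →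
      IsTraceClass (Pp - Pm) ∧
      (Summable fun k : Fin n → ℕ => (inner ℂ (eVec n k) ((Pp - Pm) (eVec n k)) : ℂ)) ∧
      ∑' k : Fin n → ℕ, (inner ℂ (eVec n k) ((Pp - Pm) (eVec n k)) : ℂ) = (-1) ^ n := by
  intro Pp Pm hPp hPm
  obtain ⟨hTrace, hSum⟩ := even_pairing_general (q := q) (by simpa using hq) n _
    (by simpa using hX0p) (by simpa using hX0m) hPp hPm
  exact ⟨hTrace, hSum.summable, hSum.tsum_eq⟩
end
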